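/- Let p₀, p₁, p₂, p₃ be affinely independent points in ℝ³ with barycentric coordinate functions x₀, …, x₃ and constant gradients g_i = ∇x_i. For k = 0, 1, 2, 3 let f_k be the face of the tetrahedron obtained by omitting the vertex p_k (with its vertices in increasing order), and let W_{f_k} be its Whitney face field. Then for any real coefficients c₀, c₁, c₂, c₃, the vector field ∑_{k=0}^{3} c_k W_{f_k} has constant divergence equal to (6 / det M) · ∑_{k=0}^{3} (−1)^k c_k, where M is the 3×3 matrix with columns p₁ − p₀, p₂ − p₀, p₃ − p₀. In particular, ∑_k c_k W_{f_k} is divergence-free if and only if c₀ − c₁ + c₂ − c₃ = 0. -/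

import Mathlib

/-- The constant gradient of an affine function `x : ℝ³ → ℝ`, as a vector. -/
noncomputable def bgrad (x : (Fin 3 → ℝ) →ᵃ[ℝ] ℝ) : Fin 3 → ℝ :=
  fun k => x.linear (Pi.single k 1)

/-- The Whitney face field of the face `[p_a, p_b, p_c]`, for barycentric coordinate
functions `x` of a tetrahedron:
`W = 2 (x_a ∇x_b × ∇x_c + x_b ∇x_c × ∇x_a + x_c ∇x_a × ∇x_b)`. -/
noncomputable def Wface (x : Fin 4 → ((Fin 3 → ℝ) →ᵃ[ℝ] ℝ)) (a b c : Fin 4)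
    (y : Fin 3 → ℝ) : Fin 3 → ℝ :=
  (2 : ℝ) • (x a y • crossProduct (bgrad (x b)) (bgrad (x c))
    + x b y • crossProduct (bgrad (x c)) (bgrad (x a))
    + x c y • crossProduct (bgrad (x a)) (bgrad (x b)))

theorem aff_hasFDerivAt (f : (Fin 3 → ℝ) →ᵃ[ℝ] ℝ) (y : Fin 3 → ℝ) :
    HasFDerivAt (fun z => f z) (LinearMap.toContinuousLinearMap f.linear) y := by
  have h : (fun z => f z) = fun z => LinearMap.toContinuousLinearMap f.linear z + f 0 := by
    funext z
    have := congrFun f.decomp z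
    simpa using this
  rw [h]
  exact (ContinuousLinearMap.hasFDerivAt _).add_const _

theorem lin_eq (f : (Fin 3 → ℝ) →ᵃ[ℝ] ℝ) (v : Fin 3 → ℝ) :
    f.linear v = ∑ k, bgrad f k * v k := by
  rw [LinearMap.pi_apply_eq_sum_univ f.linear v]
  refine Finset.sum_congr rfl fun k _ => ?_
  have : (fun j => if k = j then (1:ℝ) else 0) = Pi.single k 1 := by
    funext j; simp [Pi.single_apply, eq_comm]
  rw [this, smul_eq_mul, mul_comm]; rfl

theorem Wface_hasFDerivAt (x : Fin 4 → ((Fin 3 → ℝ) →ᵃ[ℝ] ℝ)) (a b c : Fin 4)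
    (y : Fin 3 → ℝ) (i : Fin 3) :
    HasFDerivAt (fun z => Wface x a b c z i)
      ((2 * crossProduct (bgrad (x b)) (bgrad (x c)) i) •
          LinearMap.toContinuousLinearMap (x a).linear
        + (2 * crossProduct (bgrad (x c)) (bgrad (x a)) i) •
          LinearMap.toContinuousLinearMap (x b).linear
        + (2 * crossProduct (bgrad (x a)) (bgrad (x b)) i) •
          LinearMap.toContinuousLinearMap (x c).linear) y := by
  have := (((aff_hasFDerivAt (x a) y).const_mul
      (2 * crossProduct (bgrad (x b)) (bgrad (x c)) i)).add
    ((aff_hasFDerivAt (x b) y).const_mul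
      (2 * crossProduct (bgrad (x c)) (bgrad (x a)) i))).add
    ((aff_hasFDerivAt (x c) y).const_mul
      (2 * crossProduct (bgrad (x a)) (bgrad (x b)) i))
  refine this.congr_of_eventuallyEq (Filter.Eventually.of_forall fun z => ?_)
  simp only [Wface, Pi.smul_apply, Pi.add_apply, smul_eq_mul]
  ring

/-- For a tetrahedron with affinely independent vertices `p₀, …, p₃`, a linear combination
`∑ c_k W_{f_k}` of the Whitney face fields of its four faces (`f_k` omitting vertex `p_k`,
vertices in increasing order) has constant divergence `(6 / det M) (c₀ − c₁ + c₂ − c₃)`,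
where `M` has columns `p₁ − p₀, p₂ − p₀, p₃ − p₀`; in particular it is divergence-free
iff `c₀ − c₁ + c₂ − c₃ = 0`. -/
theorem whitney_face_fields_div_combination
    (p : Fin 4 → (Fin 3 → ℝ)) (hp : AffineIndependent ℝ p)
    (x : Fin 4 → ((Fin 3 → ℝ) →ᵃ[ℝ] ℝ))
    (hx : ∀ i j, x i (p j) = if i = j then 1 else 0)
    (c : Fin 4 → ℝ)
    (V : (Fin 3 → ℝ) → (Fin 3 → ℝ))
    (hV : ∀ y, V y = c 0 • Wface x 1 2 3 y + c 1 • Wface x 0 2 3 y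
      + c 2 • Wface x 0 1 3 y + c 3 • Wface x 0 1 2 y) :
    (∀ y : Fin 3 → ℝ,
        ∑ i : Fin 3, fderiv ℝ (fun z => V z i) y (Pi.single i 1)
          = (6 / (Matrix.of fun (i j : Fin 3) => p j.succ i - p 0 i).det)
            * (c 0 - c 1 + c 2 - c 3)) ∧
    ((∀ y : Fin 3 → ℝ,
        ∑ i : Fin 3, fderiv ℝ (fun z => V z i) y (Pi.single i 1) = 0)
      ↔ c 0 - c 1 + c 2 - c 3 = 0) := by
  set M : Matrix (Fin 3) (Fin 3) ℝ := Matrix.of fun (i j : Fin 3) => p j.succ i - p 0 i with hM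
  set G : Matrix (Fin 3) (Fin 3) ℝ := Matrix.of fun (i j : Fin 3) => bgrad (x i.succ) j with hG
  have key : ∀ (i : Fin 4) (j : Fin 3), ∑ k, bgrad (x i) k * M k j
      = (if i = j.succ then 1 else 0) - (if i = 0 then 1 else 0) := by
    intro i j
    rw [← hx i j.succ, ← hx i 0]
    have h1 := (x i).linearMap_vsub (p j.succ) (p 0)
    rw [lin_eq] at h1
    simpa [hM] using h1
  have hGM : G * M = 1 := by
    ext i j
    rw [Matrix.mul_apply]
    simp only [hG, Matrix.of_apply]
    rw [key]
    simp [Matrix.one_apply, Fin.succ_ne_zero]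
  have hMG : M * G = 1 := mul_eq_one_comm.mp hGM
  have hdet : G.det * M.det = 1 := by rw [← Matrix.det_mul, hGM, Matrix.det_one]
  have hMd : M.det ≠ 0 := right_ne_zero_of_mul_eq_one hdet
  have hs : bgrad (x 0) = - (bgrad (x 1) + bgrad (x 2) + bgrad (x 3)) := by
    have h0 : Matrix.vecMul (bgrad (x 0) + bgrad (x 1) + bgrad (x 2) + bgrad (x 3)) M = 0 := by
      simp only [Matrix.add_vecMul]
      funext j
      have e : ∀ i, Matrix.vecMul (bgrad (x i)) M j = ∑ k, bgrad (x i) k * M k j := fun i => rfl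
      simp only [Pi.add_apply, e, key]
      fin_cases j <;> simp [Fin.ext_iff]
    have h1 := congrArg (fun v => Matrix.vecMul v G) h0
    simp only [Matrix.vecMul_vecMul, hMG, Matrix.vecMul_one, Matrix.zero_vecMul] at h1
    rw [eq_neg_iff_add_eq_zero, ← h1]; abel
  have hGd : 6 / M.det = 6 * G.det := by
    rw [div_eq_iff hMd, mul_assoc, hdet, mul_one]
  have main : ∀ y : Fin 3 → ℝ,
        ∑ i : Fin 3, fderiv ℝ (fun z => V z i) y (Pi.single i 1)
          = (6 / M.det) * (c 0 - c 1 + c 2 - c 3) := by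
    intro y
    have hd : ∀ i, _ := fun i : Fin 3 =>
      (((((Wface_hasFDerivAt x 1 2 3 y i).const_mul (c 0)).add
      ((Wface_hasFDerivAt x 0 2 3 y i).const_mul (c 1))).add
      ((Wface_hasFDerivAt x 0 1 3 y i).const_mul (c 2))).add
      ((Wface_hasFDerivAt x 0 1 2 y i).const_mul (c 3))).congr_of_eventuallyEq
        (f₁ := fun z => V z i) (Filter.Eventually.of_forall fun z => by simp [hV])
    have e : ∀ a k, (x a).linear (Pi.single k 1) = bgrad (x a) k := fun a k => rfl
    rw [hGd, Matrix.det_fin_three]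
    simp only [fun i => (hd i).fderiv, Fin.sum_univ_three, ContinuousLinearMap.add_apply,
      ContinuousLinearMap.smul_apply, LinearMap.coe_toContinuousLinearMap', e, hs, cross_apply,
      smul_eq_mul, hG, Matrix.of_apply, Pi.neg_apply, Pi.add_apply, Matrix.cons_val,
      Fin.succ_zero_eq_one, Fin.succ_one_eq_two, show Fin.succ (2 : Fin 3) = 3 from rfl]
    ring
  refine ⟨main, ?_⟩
  simp only [main]
  constructor
  · intro h
    exact (mul_eq_zero.mp (h 0)).resolve_left (div_ne_zero (by norm_num) hMd)
  · intro h y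
    rw [h, mul_zero]
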